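/- Let ⟨λ,ν⟩ = (ν,η) be a marked partition of type X of n. Then d_S⟨λ,ν⟩ ≤ d_S⟨λ,∅⟩ in dominance order. Explicitly: in type B, ((ν ∪ (η⁻)_C)*)_C ≤ ((λ⁻)_C)*; in type C (assuming η ≠ ∅), ((ν ∪ (η⁺)_B)*)_B ≤ ((λ⁺)_B)*; in type D, ((ν ∪ ((η*)_D)*)*)_D ≤ (λ*)_D. -/

import Mathlib

namespace NilDual

/-- A "partition" is encoded as a multiset of natural numbers (its parts). -/
abbrev Ptn := Multiset ℕ

/-- All parts are positive. -/
def IsPartition (l : Ptn) : Prop := ∀ a ∈ l, 0 < a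

/-- `height l a` is the number of parts of `l` that are ≥ `a`. -/
def height (l : Ptn) (a : ℕ) : ℕ := Multiset.card (l.filter (fun p => a ≤ p))

/-- `psum l j` is the sum of the `j` largest parts of `l`. -/
def psum (l : Ptn) (j : ℕ) : ℕ := ∑ a ∈ Finset.Icc 1 l.sum, min j (height l a)

/-- `Dom l m` means `l ≤ m` in the dominance order. -/
def Dom (l m : Ptn) : Prop := ∀ j : ℕ, psum l j ≤ psum m j

/-- The transpose (conjugate) partition. -/
def transpose (l : Ptn) : Ptn :=
  Multiset.filter (fun x => 0 < x)
    (Multiset.map (fun a => height l a) (Finset.Icc 1 l.sum).val)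

/-- The largest part (0 for the empty partition). -/
def maxPart (l : Ptn) : ℕ := l.sup

/-- The smallest part (0 for the empty partition). -/
noncomputable def minPart (l : Ptn) : ℕ := sInf {a : ℕ | a ∈ l}

/-- `λ⁺`: add 1 to the largest part. -/
def up (l : Ptn) : Ptn := (maxPart l + 1) ::ₘ l.erase (maxPart l)

/-- `λ⁻`: subtract 1 from the smallest part, deleting it if it becomes 0. -/
noncomputable def down (l : Ptn) : Ptn :=
  if minPart l ≤ 1 then l.erase (minPart l)
  else (minPart l - 1) ::ₘ l.erase (minPart l)

/-- The join `λ ∨ μ = (λ* ∪ μ*)*`. -/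
def pjoin (l m : Ptn) : Ptn := transpose (transpose l + transpose m)

/-- `λ₋ = (λ*⁻)*`. -/
noncomputable def lowerStar (l : Ptn) : Ptn := transpose (down (transpose l))

inductive PType | B | C | D
deriving DecidableEq

/-- Parts of this parity must occur with even multiplicity in a partition of type `X`. -/
def badPart : PType → ℕ → Prop
  | PType.B, a => Even a
  | PType.C, a => Odd a
  | PType.D, a => Even a

/-- Membership in `𝒫_X` (sum unconstrained). -/
def InP (X : PType) (l : Ptn) : Prop :=
  IsPartition l ∧ ∀ a : ℕ, badPart X a → Even (l.count a)

/-- The parity of `n` required for `𝒫_X(n)` to be defined. -/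
def sumParity : PType → ℕ → Prop
  | PType.B, n => Odd n
  | PType.C, n => Even n
  | PType.D, n => Even n

/-- `m` is the X-collapse of `l`: `m ∈ 𝒫_X(|l|)`, `m ≤ l` in dominance order, and `m`
dominates every member of `𝒫_X(|l|)` that is dominated by `l`. -/
def IsCollapse (X : PType) (l m : Ptn) : Prop :=
  InP X m ∧ m.sum = l.sum ∧ Dom m l ∧
    ∀ ν : Ptn, InP X ν → ν.sum = l.sum → Dom ν l → Dom ν m

def CollapseDefined (X : PType) (l : Ptn) : Prop := ∃ m, IsCollapse X l m

open Classical in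
/-- The X-collapse `λ_X` (junk value `0` if it does not exist). -/
noncomputable def collapse (X : PType) (l : Ptn) : Ptn :=
  if h : CollapseDefined X l then h.choose else 0

/-- `l` is superior to `m`: smallest part of `l` ≥ largest part of `m`. -/
def Superior (l m : Ptn) : Prop := maxPart m ≤ minPart l

def EvenlySuperior (l m : Ptn) : Prop := ∃ k : ℕ, Even k ∧ maxPart m ≤ k ∧ k ≤ minPart l

def OddlySuperior (l m : Ptn) : Prop := ∃ k : ℕ, Odd k ∧ maxPart m ≤ k ∧ k ≤ minPart l

/-- The parity required of marked parts in type `X`. -/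
def markParity : PType → ℕ → Prop
  | PType.C, a => Even a
  | _, a => Odd a

/-- `(ν, η)` is a marked partition of type `X`, with underlying partition `λ = ν + η`. -/
def IsMarked (X : PType) (nu eta : Ptn) : Prop :=
  InP X (nu + eta) ∧ sumParity X (nu + eta).sum ∧
  (∀ a ∈ nu, nu.count a = 1 ∧ markParity X a) ∧
  ((X = PType.B ∨ X = PType.D) → Even (Multiset.card nu))

/-- The Sommers duality map `d_S` on marked partitions `(ν, η)`. -/
noncomputable def dS (X : PType) (nu eta : Ptn) : Ptn :=
  match X with
  | PType.B => collapse PType.C (transpose (nu + collapse PType.C (down eta)))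
  | PType.C => collapse PType.B (transpose (nu + collapse PType.B (up eta)))
  | PType.D =>
      collapse PType.D (transpose (nu + transpose (collapse PType.D (transpose eta))))

/-- `a` is a markable part of `l` in type `X`. -/
def Markable (X : PType) (l : Ptn) (a : ℕ) : Prop :=
  a ∈ l ∧ markParity X a ∧
    (match X with
     | PType.B => Odd (height l a)
     | PType.C => Even (height l a)
     | PType.D => Even (height l a))

/-- The marked partition `⟨l, ν⟩` is reduced. -/
def Reduced (X : PType) (l nu : Ptn) : Prop := ∀ a ∈ nu, Markable X l a

/-- The parts entering the definition of a special marked partition: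
even of odd height (B), odd of even height (C), even of even height (D). -/
def AntiPart (X : PType) (l : Ptn) (a : ℕ) : Prop :=
  match X with
  | PType.B => Even a ∧ Odd (height l a)
  | PType.C => Odd a ∧ Even (height l a)
  | PType.D => Even a ∧ Even (height l a)

/-- The reduced marked partition `⟨l, ν⟩` is special. -/
def SpecialMP (X : PType) (l nu : Ptn) : Prop :=
  ∀ a ∈ l, AntiPart X l a → Even (height nu a)

/-- `a` is the largest part of `l` whose height satisfies `P`. -/
def LargestWith (l : Ptn) (P : ℕ → Prop) (a : ℕ) : Prop :=
  a ∈ l ∧ P (height l a) ∧ ∀ b ∈ l, P (height l b) → b ≤ a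

/-- Height parity for the top marked part in a basic block. -/
def heightParity : PType → ℕ → Prop
  | PType.B => fun n => Odd n
  | _ => fun n => Even n

/-- A basic block of type `X`. -/
def BasicBlock (X : PType) (nu eta : Ptn) : Prop :=
  IsMarked X nu eta ∧
  ((∃ n1 n2 : ℕ, n1 < n2 ∧ nu = {n2, n1} ∧ n1 = minPart (nu + eta) ∧
      LargestWith (nu + eta) (heightParity X) n2) ∨
   (X = PType.C ∧ ∃ n2 : ℕ, nu = {n2} ∧ LargestWith (nu + eta) (heightParity X) n2))

/-- An ultrabasic block: a basic block with `n₁ ≤ 1`. -/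
def Ultrabasic (X : PType) (nu eta : Ptn) : Prop :=
  BasicBlock X nu eta ∧ (Multiset.card nu = 2 → minPart nu ≤ 1)

/-! ### Basic facts on heights and column sums -/

/-- Sum of the first `j` columns. -/
def S (l : Ptn) (j : ℕ) : ℕ := ∑ a ∈ Finset.range j, height l (a + 1)

lemma S_zero (l : Ptn) : S l 0 = 0 := by simp [S]

lemma S_succ (l : Ptn) (j : ℕ) : S l (j + 1) = S l j + height l (j + 1) := by
  simp [S, Finset.sum_range_succ]

lemma height_cons (p : ℕ) (l : Ptn) (a : ℕ) :
    height (p ::ₘ l) a = height l a + if a ≤ p then 1 else 0 := by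
  unfold height
  by_cases h : a ≤ p <;> simp [h]

lemma height_add (l m : Ptn) (a : ℕ) : height (l + m) a = height l a + height m a := by
  simp [height]

lemma height_zero (a : ℕ) : height 0 a = 0 := by simp [height]

lemma height_anti (l : Ptn) {a b : ℕ} (h : a ≤ b) : height l b ≤ height l a := by
  induction l using Multiset.induction_on with
  | empty => simp [height_zero]
  | cons p l ih =>
    rw [height_cons, height_cons]
    split_ifs <;> omega

lemma height_eq (l : Ptn) (a : ℕ) : height l a = height l (a + 1) + l.count a := by
  induction l using Multiset.induction_on with
  | empty => simp [height_zero]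
  | cons p l ih =>
    rw [height_cons, height_cons, Multiset.count_cons]
    split_ifs <;> omega

lemma height_of_gt (l : Ptn) {a : ℕ} (h : l.sum < a) : height l a = 0 := by
  induction l using Multiset.induction_on with
  | empty => simp [height_zero]
  | cons p l ih =>
    rw [Multiset.sum_cons] at h
    rw [height_cons, ih (by omega), if_neg (by omega)]

lemma S_nil (j : ℕ) : S 0 j = 0 := by simp [S, height_zero]

lemma S_cons (p : ℕ) (l : Ptn) (j : ℕ) : S (p ::ₘ l) j = min p j + S l j := by
  induction j with
  | zero => simp [S_zero]
  | succ j ih =>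
    rw [S_succ, S_succ, ih, height_cons]
    split_ifs <;> omega

lemma S_add (l m : Ptn) (j : ℕ) : S (l + m) j = S l j + S m j := by
  simp [S, height_add, Finset.sum_add_distrib]

lemma S_eq_map (l : Ptn) (j : ℕ) : S l j = (l.map (fun p => min p j)).sum := by
  induction l using Multiset.induction_on with
  | empty => simp [S_nil]
  | cons p l ih => rw [S_cons, ih]; simp

lemma S_of_ge (l : Ptn) {j : ℕ} (h : l.sum ≤ j) : S l j = l.sum := by
  induction l using Multiset.induction_on with
  | empty => simp [S_nil]
  | cons p l ih =>
    rw [Multiset.sum_cons] at h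
    rw [S_cons, ih (by omega), Multiset.sum_cons]; omega

lemma S_concave (l : Ptn) (j : ℕ) : S l j + S l (j + 2) ≤ 2 * S l (j + 1) := by
  have h1 := S_succ l j
  have h2 := S_succ l (j + 1)
  have h3 := height_anti l (show j + 1 ≤ j + 1 + 1 by omega)
  simp only [show j + 1 + 1 = j + 2 by omega] at *
  omega

lemma S_count (l : Ptn) (j : ℕ) :
    S l j + S l (j + 2) + l.count (j + 1) = 2 * S l (j + 1) := by
  have h1 := S_succ l j
  have h2 := S_succ l (j + 1)
  have h3 := height_eq l (j + 1)
  simp only [show j + 1 + 1 = j + 2 by omega] at *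
  omega

lemma sum_Icc_range (f : ℕ → ℕ) (n : ℕ) :
    ∑ a ∈ Finset.Icc 1 n, f a = ∑ a ∈ Finset.range n, f (a + 1) := by
  induction n with
  | zero => simp
  | succ n ih => rw [Finset.sum_Icc_succ_top (by omega), ih, Finset.sum_range_succ]

lemma psum_eq (l : Ptn) (j : ℕ) {N : ℕ} (h : l.sum ≤ N) :
    psum l j = ∑ a ∈ Finset.range N, min j (height l (a + 1)) := by
  unfold psum
  rw [sum_Icc_range (fun a => min j (height l a))]
  obtain ⟨M, rfl⟩ := Nat.exists_eq_add_of_le h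
  rw [Finset.sum_range_add]
  simp only [left_eq_add]
  apply Finset.sum_eq_zero
  intro x _
  rw [height_of_gt l (by omega)]; simp

lemma psum_le_sum (l : Ptn) (j : ℕ) : psum l j ≤ l.sum := by
  rw [psum_eq l j le_rfl]
  conv_rhs => rw [← S_of_ge l le_rfl]
  exact Finset.sum_le_sum fun a _ => min_le_right _ _

lemma psum_zero (l : Ptn) : psum l 0 = 0 := by simp [psum]

/-! ### Legendre duality between row sums and column sums -/

lemma legendre_le (l : Ptn) (j k : ℕ) : psum l j + S l k ≤ l.sum + j * k := by
  rw [psum_eq l j (show l.sum ≤ k + l.sum by omega), Finset.sum_range_add]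
  have e : l.sum = S l (k + l.sum) := (S_of_ge l (by omega)).symm
  have e2 : S l (k + l.sum) = S l k + ∑ x ∈ Finset.range l.sum, height l (k + x + 1) := by
    unfold S; rw [Finset.sum_range_add]
  have h1 : ∑ x ∈ Finset.range k, min j (height l (x + 1)) ≤ j * k := by
    calc _ ≤ ∑ x ∈ Finset.range k, j := Finset.sum_le_sum fun a _ => min_le_left _ _
      _ = j * k := by simp [mul_comm]
  have h2 : ∑ x ∈ Finset.range l.sum, min j (height l (k + x + 1)) ≤
      ∑ x ∈ Finset.range l.sum, height l (k + x + 1) :=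
    Finset.sum_le_sum fun a _ => min_le_right _ _
  omega

lemma legendre_eq (l : Ptn) (j k : ℕ) (h1 : ∀ a, a < k → j ≤ height l (a + 1))
    (h2 : ∀ a, k ≤ a → height l (a + 1) ≤ j) : psum l j + S l k = l.sum + j * k := by
  rw [psum_eq l j (show l.sum ≤ k + l.sum by omega), Finset.sum_range_add]
  have e : l.sum = S l (k + l.sum) := (S_of_ge l (by omega)).symm
  have e2 : S l (k + l.sum) = S l k + ∑ x ∈ Finset.range l.sum, height l (k + x + 1) := by
    unfold S; rw [Finset.sum_range_add]
  have h1 : ∑ x ∈ Finset.range k, min j (height l (x + 1)) = j * k := by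
    calc _ = ∑ x ∈ Finset.range k, j := Finset.sum_congr rfl fun a ha =>
            min_eq_left (h1 a (Finset.mem_range.1 ha))
      _ = j * k := by simp [mul_comm]
  have h2 : ∑ x ∈ Finset.range l.sum, min j (height l (k + x + 1)) =
      ∑ x ∈ Finset.range l.sum, height l (k + x + 1) :=
    Finset.sum_congr rfl fun a _ => min_eq_right (h2 (k + a) (by omega))
  omega

lemma exists_j (l : Ptn) (k : ℕ) : ∃ j, psum l j + S l k = l.sum + j * k :=
  ⟨height l (k + 1), legendre_eq l _ k (fun a ha => height_anti l (by omega))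
    (fun a ha => height_anti l (by omega))⟩

lemma exists_k (l : Ptn) (j : ℕ) : ∃ k, psum l j + S l k = l.sum + j * k := by
  classical
  have hex : ∃ k, height l (k + 1) ≤ j := ⟨l.sum, by rw [height_of_gt l (by omega)]; omega⟩
  refine ⟨Nat.find hex, legendre_eq l _ _ (fun a ha => ?_) (fun a ha => ?_)⟩
  · have := Nat.find_min hex ha; omega
  · exact (height_anti l (by omega)).trans (Nat.find_spec hex)

lemma dom_iff {l m : Ptn} (h : l.sum = m.sum) : Dom l m ↔ ∀ k, S m k ≤ S l k := by
  constructor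
  · intro H k
    obtain ⟨j, hj⟩ := exists_j l k
    have := legendre_le m j k
    have := H j
    omega
  · intro H j
    obtain ⟨k, hk⟩ := exists_k m j
    have := legendre_le l j k
    have := H k
    omega

lemma sum_filter_pos (f : ℕ → ℕ) (hf : f 0 = 0) (m : Multiset ℕ) :
    ((m.filter (fun x => 0 < x)).map f).sum = (m.map f).sum := by
  induction m using Multiset.induction_on with
  | empty => simp
  | cons p l ih =>
    rcases Nat.eq_zero_or_pos p with rfl | hp
    · simp [ih, hf]
    · simp [ih, hp]

lemma S_transpose (l : Ptn) (j : ℕ) : S (transpose l) j = psum l j := by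
  rw [S_eq_map, transpose, sum_filter_pos (fun p => min p j) (by simp), Multiset.map_map]
  unfold psum
  simp only [Function.comp_def, min_comm j]
  rfl

lemma sum_transpose (l : Ptn) : (transpose l).sum = l.sum := by
  have h := sum_filter_pos id rfl
    (Multiset.map (fun a => height l a) (Finset.Icc 1 l.sum).val)
  rw [Multiset.map_id, Multiset.map_id] at h
  rw [transpose, h]
  change ∑ a ∈ Finset.Icc 1 l.sum, height l a = _
  rw [sum_Icc_range]
  exact S_of_ge l le_rfl

lemma psum_transpose (l : Ptn) (j : ℕ) : psum (transpose l) j = S l j := by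
  apply le_antisymm
  · obtain ⟨k, hk⟩ := exists_j l j
    have := legendre_le (transpose l) j k
    rw [S_transpose, sum_transpose] at this
    rw [mul_comm] at hk
    omega
  · obtain ⟨k, hk⟩ := exists_k (transpose l) j
    rw [S_transpose, sum_transpose] at hk
    have := legendre_le l k j
    rw [mul_comm] at hk
    omega

/-! ### Parity characterisation of `𝒫_X` -/

/-- The class of column indices where parity is prescribed. -/
def cls : PType → ℕ
  | PType.B => 1
  | PType.C => 0
  | PType.D => 1

lemma badPart_iff (X : PType) (a : ℕ) : badPart X a ↔ (a + 1) % 2 = cls X := by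
  cases X <;> simp only [badPart, cls, Nat.even_iff, Nat.odd_iff] <;> omega

lemma InP_parity {X : PType} {l : Ptn} (h : InP X l) (j : ℕ) (hj : j % 2 = cls X) :
    S l j % 2 = l.sum % 2 := by
  have step : ∀ i, S l j % 2 = S l (j + 2 * i) % 2 := by
    intro i
    induction i with
    | zero => rfl
    | succ i ih =>
      have h1 := S_count l (j + 2 * i)
      have h2 := h.2 (j + 2 * i + 1) ((badPart_iff X _).2 (by omega))
      rw [Nat.even_iff] at h2
      rw [ih, show j + 2 * (i + 1) = j + 2 * i + 2 by ring]
      omega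
  rw [step l.sum, S_of_ge l (by omega)]

lemma InP_of_parity {X : PType} {l : Ptn} (hp : IsPartition l)
    (h : ∀ j, j % 2 = cls X → S l j % 2 = l.sum % 2) : InP X l := by
  refine ⟨hp, fun a ha => ?_⟩
  rw [badPart_iff] at ha
  rw [Nat.even_iff]
  rcases a with _ | a
  · rw [Multiset.count_eq_zero_of_notMem (fun h0 => by simpa using hp 0 h0)]
  · have h1 := S_count l a
    have h2 := h a (by omega)
    have h3 := h (a + 2) (by omega)
    omega

lemma corner_parity {X : PType} {l : Ptn} (h : InP X l) (k : ℕ)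
    (hk : psum l k + psum l (k + 2) < 2 * psum l (k + 1)) :
    psum l (k + 1) % 2 = (cls X * (k + 1)) % 2 := by
  have hb : ∃ b, height l (b + 1) = k + 1 := by
    by_contra! hcon
    have : psum l k + psum l (k + 2) = 2 * psum l (k + 1) := by
      rw [psum_eq l _ le_rfl, psum_eq l _ le_rfl, psum_eq l _ le_rfl, ← Finset.sum_add_distrib,
        Finset.mul_sum]
      refine Finset.sum_congr rfl fun b _ => ?_
      have := hcon b
      omega
    omega
  obtain ⟨b, hb⟩ := hb
  have main : ∀ c, c % 2 = cls X → psum l (k + 1) + S l c = l.sum + (k + 1) * c →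
      psum l (k + 1) % 2 = (cls X * (k + 1)) % 2 := by
    intro c hc he
    have hpar := InP_parity h c hc
    have : (cls X * (k + 1)) % 2 = ((k + 1) * c) % 2 := by
      rw [← hc, mul_comm (k + 1) c]; simp [Nat.mul_mod]
    rw [this]
    omega
  by_cases hc : b % 2 = cls X
  · exact main b hc (legendre_eq l _ _
      (fun a ha => hb ▸ height_anti l (by omega)) (fun a ha => hb ▸ height_anti l (by omega)))
  · refine main (b + 1) ?_ (legendre_eq l _ _
      (fun a ha => hb ▸ height_anti l (by omega)) (fun a ha => hb ▸ height_anti l (by omega)))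
    cases X <;> simp only [cls] at * <;> omega

lemma psum_le_of_floor {X : PType} {l : Ptn} (h : InP X l) (A B : ℕ → ℕ)
    (hA : ∀ j, psum l j ≤ A j) (hB : ∀ j, B j + B (j + 2) ≤ 2 * B (j + 1))
    (hAB : ∀ j v, v ≤ A j → v % 2 = (cls X * j) % 2 → v ≤ B j) (j : ℕ) :
    psum l j ≤ B j := by
  induction j with
  | zero => rw [psum_zero]; omega
  | succ k ih =>
    by_contra! hcon
    have key : ∀ i, B (k + 1 + i) + 1 + i ≤ psum l (k + 1 + i) ∧
        B (k + 1 + i) + psum l (k + i) + 1 ≤ psum l (k + 1 + i) + B (k + i) := by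
      intro i
      induction i with
      | zero => constructor <;> simp only [add_zero] <;> omega
      | succ i ih2 =>
        have hc := corner_parity h (k + i)
        have hb := hB (k + i)
        have ha := hA (k + i + 1)
        have hab := hAB (k + i + 1) _ ha
        simp only [show k + 1 + i = k + i + 1 by omega, show k + 1 + (i + 1) = k + i + 2 by omega,
          show k + (i + 1) = k + i + 1 by omega] at *
        by_cases hlt : psum l (k + i) + psum l (k + i + 2) < 2 * psum l (k + i + 1)
        · have := hab (hc hlt); omega
        · constructor <;> omega
    have h1 := (key l.sum).1
    have h2 := psum_le_sum l (k + 1 + l.sum)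
    omega

/-! ### Explicit collapse -/

lemma exists_of_concave (f : ℕ → ℕ) (N n : ℕ) (h0 : f 0 = 0)
    (hf : ∀ j, f j + f (j + 2) ≤ 2 * f (j + 1)) (hN : ∀ j, N ≤ j → f j = n) :
    ∃ m : Ptn, IsPartition m ∧ ∀ j, S m j = f j := by
  let m : Ptn := ∑ a ∈ Finset.range N,
    Multiset.replicate (2 * f (a + 1) - f a - f (a + 2)) (a + 1)
  have hcount : ∀ b, m.count (b + 1) = 2 * f (b + 1) - f b - f (b + 2) := by
    intro b
    simp only [m, Multiset.count_sum', Multiset.count_replicate, Nat.add_right_cancel_iff]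
    rw [Finset.sum_ite_eq']
    split_ifs with hb
    · rfl
    · rw [Finset.mem_range, not_lt] at hb
      rw [hN b hb, hN (b + 1) (by omega), hN (b + 2) (by omega)]; omega
  have hmem : ∀ p ∈ m, 0 < p ∧ p ≤ N := by
    intro p hp
    rw [Multiset.mem_sum] at hp
    obtain ⟨a, ha, hp⟩ := hp
    rw [Finset.mem_range] at ha
    have := Multiset.eq_of_mem_replicate hp
    omega
  have hbig : ∀ b, N ≤ b → height m (b + 1) = 0 := by
    intro b hb
    rw [height, Multiset.card_eq_zero, Multiset.filter_eq_nil]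
    intro p hp
    have := hmem p hp
    omega
  have hheight : ∀ i b, N ≤ b + i → height m (b + 1) + f b = f (b + 1) := by
    intro i
    induction i with
    | zero => intro b hb; rw [hbig b hb, hN b hb, hN (b + 1) (by omega)]; omega
    | succ i ih =>
      intro b hb
      have h1 := ih (b + 1) (by omega)
      have h2 := height_eq m (b + 1)
      have h3 := hcount b
      have h4 := hf b
      simp only [show b + 1 + 1 = b + 2 by omega] at *
      omega
  refine ⟨m, fun p hp => (hmem p hp).1, fun j => ?_⟩
  induction j with
  | zero => rw [S_zero, h0]
  | succ j ih =>
    have := hheight N j (by omega)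
    rw [S_succ, ih]; omega

lemma exists_collapse (X : PType) (l : Ptn) (hp : sumParity X l.sum) :
    ∃ m, IsCollapse X l m ∧
      (∀ j, j % 2 = cls X → S m j = S l j + (S l j + l.sum) % 2) ∧
      (∀ j, S m (j + 1) ≤ S l (j + 1) ∨ (S m (j + 1) ≤ S l (j + 1) + 1 ∧
        ((j + 1) % 2 ≠ cls X → (S l j + l.sum) % 2 = 1 ∧ (S l (j + 2) + l.sum) % 2 = 1))) := by
  classical
  let n := l.sum
  let eps : ℕ → ℕ := fun j => if j % 2 = cls X then (S l j + n) % 2 else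
    if 1 ≤ j ∧ 2 * S l j = S l (j - 1) + S l (j + 1) ∧ (S l (j - 1) + n) % 2 = 1 ∧
      (S l (j + 1) + n) % 2 = 1 then 1 else 0
  have hcls : cls X = 0 ∨ cls X = 1 := by cases X <;> simp [cls]
  have hev : cls X = 0 → n % 2 = 0 := by
    cases X <;> simp [cls, sumParity, Nat.even_iff] at * <;> assumption
  have he1 : ∀ j, j % 2 = cls X → eps j = (S l j + n) % 2 := by
    intro j hj; simp only [eps, if_pos hj]
  have he2 : ∀ j, (j + 1) % 2 ≠ cls X →
      (2 * S l (j + 1) = S l j + S l (j + 2) ∧ (S l j + n) % 2 = 1 ∧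
        (S l (j + 2) + n) % 2 = 1 ∧ eps (j + 1) = 1) ∨
      (¬ (2 * S l (j + 1) = S l j + S l (j + 2) ∧ (S l j + n) % 2 = 1 ∧
        (S l (j + 2) + n) % 2 = 1) ∧ eps (j + 1) = 0) := by
    intro j hj
    simp only [eps, if_neg hj, show j + 1 - 1 = j by omega, show j + 1 + 1 = j + 2 by omega]
    split_ifs with h
    · left; exact ⟨h.2.1, h.2.2.1, h.2.2.2, rfl⟩
    · right; refine ⟨fun h' => h ⟨by omega, h'⟩, rfl⟩
  have he0 : eps 0 = 0 := by
    rcases hcls with h | h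
    · rw [he1 0 (by omega), S_zero]; have := hev h; omega
    · simp only [eps]; rw [if_neg (by omega), if_neg (by omega)]
  obtain ⟨m, hm, hS⟩ := exists_of_concave (fun j => S l j + eps j) (n + 1) n
    (by simp only [he0, S_zero]) (by
      intro j
      have hc := S_concave l j
      by_cases hj : (j + 1) % 2 = cls X
      · have h1 := he1 (j + 1) hj
        have h3 := he2 (j + 1) (by omega)
        simp only [show j + 1 + 1 = j + 2 by omega] at *
        rcases j with _ | j
        · omega
        · have h2 := he2 j (by omega)
          simp only [show j + 1 + 1 = j + 2 by omega] at *
          omega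
      · have h1 := he1 j (by omega)
        have h2 := he1 (j + 2) (by omega)
        have h3 := he2 j hj
        omega) (by
      intro j hj
      obtain ⟨j, rfl⟩ := Nat.exists_eq_add_of_le' (show 1 ≤ j by omega)
      have s1 := S_of_ge l (show l.sum ≤ j by omega)
      have s2 := S_of_ge l (show l.sum ≤ j + 1 by omega)
      change S l (j + 1) + eps (j + 1) = l.sum
      by_cases hjc : (j + 1) % 2 = cls X
      · rw [he1 _ hjc, s2]; omega
      · have := he2 j hjc
        omega)
  have hsum : m.sum = l.sum := by
    obtain ⟨j, hj⟩ : ∃ j, j = 2 * (m.sum + l.sum) + cls X := ⟨_, rfl⟩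
    have h1 := hS j
    rw [he1 j (by omega), S_of_ge m (by omega), S_of_ge l (by omega)] at h1
    omega
  refine ⟨m, ⟨InP_of_parity hm ?_, hsum, (dom_iff hsum).2 ?_, ?_⟩, ?_, ?_⟩
  · intro j hj
    rw [hS, he1 j hj, hsum]; omega
  · intro k; rw [hS]; omega
  · intro nu hnu hs hd
    rw [dom_iff (by omega)] at hd ⊢
    have cl : ∀ j, j % 2 = cls X → S m j ≤ S nu j := by
      intro j hj
      have h1 := InP_parity hnu j hj
      have h2 := hd j
      rw [hS, he1 j hj]
      omega
    intro k
    by_cases hk : k % 2 = cls X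
    · exact cl k hk
    · rcases k with _ | k
      · simp [S_zero]
      · have h1 := cl k (by omega)
        have h2 := cl (k + 2) (by omega)
        have h3 := S_concave nu k
        have h4 := he2 k hk
        have h5 := hd (k + 1)
        have h6 := he1 k (by omega)
        have h7 := he1 (k + 2) (by omega)
        rw [hS] at *
        omega
  · intro j hj; rw [hS, he1 j hj]
  · intro j
    rw [hS]
    by_cases hj : (j + 1) % 2 = cls X
    · have := he1 _ hj
      right; exact ⟨by omega, fun h => absurd hj h⟩
    · have := he2 j hj
      rcases this with h | h
      · right; exact ⟨by omega, fun _ => ⟨h.2.1, h.2.2.1⟩⟩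
      · left; omega

lemma collapse_isCollapse (X : PType) (l : Ptn) (hp : sumParity X l.sum) :
    IsCollapse X l (collapse X l) := by
  have hd : CollapseDefined X l := let ⟨m, hm, _⟩ := exists_collapse X l hp; ⟨m, hm⟩
  unfold collapse
  rw [dif_pos hd]
  exact hd.choose_spec

lemma collapse_S (X : PType) (l : Ptn) (hp : sumParity X l.sum) :
    (∀ j, j % 2 = cls X → S (collapse X l) j = S l j + (S l j + l.sum) % 2) ∧
    (∀ j, S (collapse X l) (j + 1) ≤ S l (j + 1) ∨ (S (collapse X l) (j + 1) ≤ S l (j + 1) + 1 ∧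
      ((j + 1) % 2 ≠ cls X → (S l j + l.sum) % 2 = 1 ∧ (S l (j + 2) + l.sum) % 2 = 1))) := by
  obtain ⟨m, hm, h1, h2⟩ := exists_collapse X l hp
  have hc := collapse_isCollapse X l hp
  have e : ∀ j, S (collapse X l) j = S m j := by
    intro j
    have a := (dom_iff (by rw [hc.2.1, hm.2.1])).1 (hc.2.2.2 m hm.1 hm.2.1 hm.2.2.1) j
    have b := (dom_iff (by rw [hc.2.1, hm.2.1])).1 (hm.2.2.2 _ hc.1 hc.2.1 hc.2.2.1) j
    omega
  simp only [e]
  exact ⟨h1, h2⟩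

/-! ### The operations `down` and `up` -/

lemma minPart_mem {l : Ptn} (h : l ≠ 0) : minPart l ∈ l := by
  obtain ⟨a, ha⟩ := Multiset.exists_mem_of_ne_zero h
  exact Nat.sInf_mem (s := {a : ℕ | a ∈ l}) ⟨a, ha⟩

lemma minPart_le {l : Ptn} {a : ℕ} (h : a ∈ l) : minPart l ≤ a :=
  Nat.sInf_le (s := {a : ℕ | a ∈ l}) h

lemma maxPart_mem {l : Ptn} (h : l ≠ 0) : maxPart l ∈ l := by
  unfold maxPart
  induction l using Multiset.induction_on with
  | empty => exact absurd rfl h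
  | cons p l ih =>
    rw [Multiset.sup_cons]
    by_cases hl : l = 0
    · subst hl; simp
    · rcases le_total p l.sup with hp | hp
      · rw [sup_eq_right.2 hp]; exact Multiset.mem_cons_of_mem (ih hl)
      · rw [sup_eq_left.2 hp]; exact Multiset.mem_cons_self _ _

lemma le_maxPart {l : Ptn} {a : ℕ} (h : a ∈ l) : a ≤ maxPart l := Multiset.le_sup h

lemma S_down {l : Ptn} (h : l ≠ 0) (hp : IsPartition l) (j : ℕ) :
    S (down l) j + (if minPart l ≤ j then 1 else 0) = S l j := by
  have hm := minPart_mem h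
  have hpos := hp _ hm
  have e : S l j = min (minPart l) j + S (l.erase (minPart l)) j := by
    conv_lhs => rw [← Multiset.cons_erase hm]
    rw [S_cons]
  rw [e]
  unfold down
  split_ifs
  · omega
  · omega
  · rw [S_cons]; omega
  · rw [S_cons]; omega

lemma sum_down {l : Ptn} (h : l ≠ 0) (hp : IsPartition l) : (down l).sum + 1 = l.sum := by
  have h1 := S_down h hp (minPart l + (down l).sum + l.sum)
  rw [if_pos (by omega), S_of_ge _ (by omega), S_of_ge l (by omega)] at h1
  exact h1

lemma S_up {l : Ptn} (h : l ≠ 0) (j : ℕ) :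
    S (up l) j = S l j + (if maxPart l < j then 1 else 0) := by
  have hm := maxPart_mem h
  have e : S l j = min (maxPart l) j + S (l.erase (maxPart l)) j := by
    conv_lhs => rw [← Multiset.cons_erase hm]
    rw [S_cons]
  rw [e]
  unfold up
  rw [S_cons]
  split_ifs <;> omega

lemma sum_up {l : Ptn} (h : l ≠ 0) : (up l).sum = l.sum + 1 := by
  have h1 := S_up h (maxPart l + 1 + (up l).sum + l.sum)
  rw [if_pos (by omega), S_of_ge _ (by omega), S_of_ge l (by omega)] at h1
  exact h1

lemma S_of_le_min {l : Ptn} {j : ℕ} (h : ∀ p ∈ l, j ≤ p) : S l j = Multiset.card l * j := by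
  induction l using Multiset.induction_on with
  | empty => simp [S_nil]
  | cons p l ih =>
    rw [S_cons, ih (fun q hq => h q (Multiset.mem_cons_of_mem hq)), Multiset.card_cons,
      min_eq_right (h p (Multiset.mem_cons_self _ _))]
    ring

lemma S_of_max_le {l : Ptn} {j : ℕ} (h : ∀ p ∈ l, p ≤ j) : S l j = l.sum := by
  induction l using Multiset.induction_on with
  | empty => simp [S_nil]
  | cons p l ih =>
    rw [S_cons, ih (fun q hq => h q (Multiset.mem_cons_of_mem hq)), Multiset.sum_cons,
      min_eq_left (h p (Multiset.mem_cons_self _ _))]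

lemma S_odd_parts {l : Ptn} (h : ∀ p ∈ l, Odd p) {j : ℕ} (hj : j % 2 = 1) :
    S l j % 2 = Multiset.card l % 2 := by
  induction l using Multiset.induction_on with
  | empty => simp [S_nil]
  | cons p l ih =>
    have h1 := ih (fun q hq => h q (Multiset.mem_cons_of_mem hq))
    have h2 := Nat.odd_iff.1 (h p (Multiset.mem_cons_self _ _))
    rw [S_cons, Multiset.card_cons]
    omega

lemma S_even_parts {l : Ptn} (h : ∀ p ∈ l, Even p) {j : ℕ} (hj : j % 2 = 0) :
    S l j % 2 = 0 := by
  induction l using Multiset.induction_on with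
  | empty => simp [S_nil]
  | cons p l ih =>
    have h1 := ih (fun q hq => h q (Multiset.mem_cons_of_mem hq))
    have h2 := Nat.even_iff.1 (h p (Multiset.mem_cons_self _ _))
    rw [S_cons]
    omega

lemma sum_odd_parts {l : Ptn} (h : ∀ p ∈ l, Odd p) : l.sum % 2 = Multiset.card l % 2 := by
  rw [← S_odd_parts h (j := 2 * l.sum + 1) (by omega), S_of_ge l (by omega)]

lemma sum_even_parts {l : Ptn} (h : ∀ p ∈ l, Even p) : l.sum % 2 = 0 := by
  rw [← S_even_parts h (j := 2 * l.sum) (by omega), S_of_ge l (by omega)]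

/-! ### The three types -/

lemma final_step (Y : PType) (tau mu : Ptn) (hs : tau.sum = mu.sum) (hp : sumParity Y tau.sum)
    (hfl : ∀ j v, v ≤ S tau j → v % 2 = (cls Y * j) % 2 → v ≤ S mu j) :
    Dom (collapse Y (transpose tau)) (collapse Y (transpose (0 + mu))) ∧
    Dom (collapse Y (transpose tau)) (transpose mu) := by
  have hp1 : sumParity Y (transpose tau).sum := by rwa [sum_transpose]
  have hp2 : sumParity Y (transpose mu).sum := by rwa [sum_transpose, ← hs]
  have hc := collapse_isCollapse Y _ hp1
  have main : Dom (collapse Y (transpose tau)) (transpose mu) := by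
    intro j
    rw [psum_transpose]
    refine psum_le_of_floor hc.1 (S tau) (S mu) (fun j => ?_) (S_concave mu) hfl j
    rw [← psum_transpose]; exact hc.2.2.1 j
  refine ⟨?_, main⟩
  rw [zero_add]
  refine (collapse_isCollapse Y _ hp2).2.2.2 _ hc.1 ?_ main
  rw [hc.2.1, sum_transpose, sum_transpose, hs]

lemma typeB (nu eta : Ptn) (h : IsMarked PType.B nu eta) :
    Dom (dS PType.B nu eta) (dS PType.B 0 (nu + eta)) ∧
    Dom (dS PType.B nu eta) (transpose (collapse PType.C (down (nu + eta)))) := by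
  obtain ⟨hin, hpar, hnu, hev⟩ := h
  have hodd : ∀ p ∈ nu, Odd p := fun p hp => (hnu p hp).2
  have hcard := Nat.even_iff.1 (hev (Or.inl rfl))
  have hnusum := sum_odd_parts hodd
  have hpar' : (nu + eta).sum % 2 = 1 := Nat.odd_iff.1 hpar
  have hsadd : (nu + eta).sum = nu.sum + eta.sum := Multiset.sum_add _ _
  have heta : eta ≠ 0 := by rintro rfl; rw [Multiset.sum_zero] at hsadd; omega
  have hla : nu + eta ≠ 0 := by intro h0; rw [h0] at hpar'; simp at hpar'
  have hpe : IsPartition eta := fun a ha => hin.1 a (Multiset.mem_add.2 (Or.inr ha))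
  have s1 := sum_down heta hpe
  have s2 := sum_down hla hin.1
  have p1 : sumParity PType.C (down eta).sum := Nat.even_iff.2 (by omega)
  have p2 : sumParity PType.C (down (nu + eta)).sum := Nat.even_iff.2 (by omega)
  have c1 := collapse_isCollapse _ _ p1
  have c2 := collapse_isCollapse _ _ p2
  have cs1 := collapse_S _ _ p1
  have cs2 := collapse_S _ _ p2
  have hmin : minPart (nu + eta) ≤ minPart eta :=
    minPart_le (Multiset.mem_add.2 (Or.inr (minPart_mem heta)))
  have t1 : (nu + collapse PType.C (down eta)).sum = nu.sum + (down eta).sum := by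
    rw [Multiset.sum_add, c1.2.1]
  refine final_step PType.C _ _ ?_ ?_ ?_
  · rw [c2.2.1]; omega
  · rw [t1]; exact Nat.even_iff.2 (by omega)
  · intro j v hv hv2
    simp only [cls, zero_mul, Nat.zero_mod] at hv2 cs1 cs2
    rw [S_add] at hv
    have d1 := S_down heta hpe j
    have d2 := S_down hla hin.1 j
    rw [S_add] at d2
    have hlow : ∀ i, i < minPart eta → i % 2 = 0 → S (down eta) i % 2 = 0 := by
      intro i hi hi2
      have d := S_down heta hpe i
      rw [if_neg (by omega), S_of_le_min (l := eta) (fun p hp => by have := minPart_le hp; omega)] at d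
      rw [add_zero] at d
      rw [d, Nat.mul_mod, hi2]; simp
    by_cases hj : j % 2 = 0
    · rw [cs1.1 j hj] at hv
      rw [cs2.1 j hj]
      have hl := hlow j
      split_ifs at d1 d2 <;> omega
    · obtain ⟨j, rfl⟩ := Nat.exists_eq_add_of_le' (show 1 ≤ j by omega)
      have x := S_odd_parts hodd (j := j + 1) (by omega)
      have y := InP_parity hin (j + 1) (by simp only [cls]; omega)
      rw [S_add] at y
      have z := (dom_iff c2.2.1).1 c2.2.2.1 (j + 1)
      have w := cs1.2 j
      have hl := hlow j
      split_ifs at d1 d2 <;> omega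

lemma typeC (nu eta : Ptn) (h : IsMarked PType.C nu eta) (heta : eta ≠ 0) :
    Dom (dS PType.C nu eta) (dS PType.C 0 (nu + eta)) ∧
    Dom (dS PType.C nu eta) (transpose (collapse PType.B (up (nu + eta)))) := by
  obtain ⟨hin, hpar, hnu, -⟩ := h
  have heven : ∀ p ∈ nu, Even p := fun p hp => (hnu p hp).2
  have hnusum := sum_even_parts heven
  have hpar' : (nu + eta).sum % 2 = 0 := Nat.even_iff.1 hpar
  have hsadd : (nu + eta).sum = nu.sum + eta.sum := Multiset.sum_add _ _
  have hla : nu + eta ≠ 0 := by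
    intro h0; exact heta (add_eq_zero.1 h0).2
  have s1 := sum_up heta
  have s2 := sum_up hla
  have p1 : sumParity PType.B (up eta).sum := Nat.odd_iff.2 (by omega)
  have p2 : sumParity PType.B (up (nu + eta)).sum := Nat.odd_iff.2 (by omega)
  have c1 := collapse_isCollapse _ _ p1
  have c2 := collapse_isCollapse _ _ p2
  have cs1 := collapse_S _ _ p1
  have cs2 := collapse_S _ _ p2
  have hmax : maxPart eta ≤ maxPart (nu + eta) :=
    le_maxPart (Multiset.mem_add.2 (Or.inr (maxPart_mem heta)))
  have t1 : (nu + collapse PType.B (up eta)).sum = nu.sum + (up eta).sum := by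
    rw [Multiset.sum_add, c1.2.1]
  refine final_step PType.B _ _ ?_ ?_ ?_
  · rw [c2.2.1]; omega
  · rw [t1]; exact Nat.odd_iff.2 (by omega)
  · intro j v hv hv2
    simp only [cls, one_mul] at hv2 cs1 cs2
    rw [S_add] at hv
    have d1 := S_up heta j
    have d2 := S_up hla j
    rw [S_add] at d2
    have hhigh : ∀ i, maxPart eta < i → S (up eta) i = eta.sum + 1 := by
      intro i hi
      rw [S_up heta i, if_pos hi, S_of_max_le (fun p hp => by have := le_maxPart hp; omega)]
    have hl := hhigh j
    by_cases hj : j % 2 = 1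
    · rw [cs1.1 j hj] at hv
      rw [cs2.1 j hj]
      split_ifs at d1 d2 <;> omega
    · rcases j with _ | j
      · simp only [S_zero] at hv; omega
      have x := S_even_parts heven (j := j + 1) (by omega)
      have y := InP_parity hin (j + 1) (by simp only [cls]; omega)
      rw [S_add] at y
      have z := (dom_iff c2.2.1).1 c2.2.2.1 (j + 1)
      have w := cs1.2 j
      have hl2 := hhigh (j + 2)
      split_ifs at d1 d2 <;> omega

lemma typeD (nu eta : Ptn) (h : IsMarked PType.D nu eta) :
    Dom (dS PType.D nu eta) (dS PType.D 0 (nu + eta)) ∧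
    Dom (dS PType.D nu eta) (collapse PType.D (transpose (nu + eta))) := by
  obtain ⟨hin, hpar, hnu, hev⟩ := h
  have hodd : ∀ p ∈ nu, Odd p := fun p hp => (hnu p hp).2
  have hcard := Nat.even_iff.1 (hev (Or.inr rfl))
  have hnusum := sum_odd_parts hodd
  have hpar' : (nu + eta).sum % 2 = 0 := Nat.even_iff.1 hpar
  have hsadd : (nu + eta).sum = nu.sum + eta.sum := Multiset.sum_add _ _
  have p1 : sumParity PType.D (transpose eta).sum := by
    rw [sum_transpose]; exact Nat.even_iff.2 (by omega)
  have p2 : sumParity PType.D (transpose (nu + eta)).sum := by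
    rw [sum_transpose]; exact hpar
  have c1 := collapse_isCollapse _ _ p1
  have c2 := collapse_isCollapse _ _ p2
  have t1 : (transpose (nu + transpose (collapse PType.D (transpose eta)))).sum
      = (nu + eta).sum := by
    rw [sum_transpose, Multiset.sum_add, sum_transpose, c1.2.1, sum_transpose, hsadd]
  have c3 := collapse_isCollapse PType.D
    (transpose (nu + transpose (collapse PType.D (transpose eta)))) (by rw [t1]; exact hpar)
  have t2 : (transpose (0 + transpose (collapse PType.D (transpose (nu + eta))))).sum
      = (nu + eta).sum := by
    rw [zero_add, sum_transpose, sum_transpose, c2.2.1, sum_transpose]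
  have c4 := collapse_isCollapse PType.D
    (transpose (0 + transpose (collapse PType.D (transpose (nu + eta)))))
    (by rw [t2]; exact hpar)
  have main : Dom (dS PType.D nu eta) (collapse PType.D (transpose (nu + eta))) := by
    refine c2.2.2.2 _ c3.1 (c3.2.1.trans (by rw [t1, sum_transpose])) ?_
    intro j
    refine (c3.2.2.1 j).trans ?_
    rw [psum_transpose, psum_transpose, S_add, S_add, S_transpose]
    have := c1.2.2.1 j
    rw [psum_transpose] at this
    omega
  refine ⟨c4.2.2.2 _ c3.1 (c3.2.1.trans (by rw [t1, t2])) ?_, main⟩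
  intro j
  rw [zero_add, psum_transpose, S_transpose]
  exact main j

/-- Proposition 2.3 of the paper in the classical types: `d_S⟨λ,ν⟩ ≤ d_S⟨λ,∅⟩`, with the
explicit formulas for `d_S⟨λ,∅⟩` in each type. -/
theorem dS_le_dS_trivial (X : PType) (nu eta : Ptn)
    (h : IsMarked X nu eta) (hC : X = PType.C → eta ≠ 0) :
    Dom (dS X nu eta) (dS X 0 (nu + eta)) ∧
    (X = PType.B → Dom (dS X nu eta) (transpose (collapse PType.C (down (nu + eta))))) ∧
    (X = PType.C → Dom (dS X nu eta) (transpose (collapse PType.B (up (nu + eta))))) ∧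
    (X = PType.D → Dom (dS X nu eta) (collapse PType.D (transpose (nu + eta)))) := by
  cases X with
  | B =>
    obtain ⟨h1, h2⟩ := typeB nu eta h
    exact ⟨h1, fun _ => h2, (fun e => nomatch e), (fun e => nomatch e)⟩
  | C =>
    obtain ⟨h1, h2⟩ := typeC nu eta h (hC rfl)
    exact ⟨h1, (fun e => nomatch e), fun _ => h2, (fun e => nomatch e)⟩
  | D =>
    obtain ⟨h1, h2⟩ := typeD nu eta h
    exact ⟨h1, (fun e => nomatch e), (fun e => nomatch e), fun _ => h2⟩

end NilDual
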